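/- arXiv:1309.1697 — 3 statements merged into one kernel-verified Lean document; each statement's English description precedes it below -/
import Mathlib

section
/- Let a = x₀ < x₁ < ⋯ < x_N = b be a partition of [a,b] with element lengths h_j = x_j − x_{j−1}, h_min = min_j h_j and h_max = max_j h_j, and let v_j : [x_{j−1}, x_j] → ℝ be continuously differentiable for j = 1,…,N. Then the squared Euclidean norm of the interior jumps satisfies ∑_{j=1}^{N−1} (v_{j+1}(x_j) − v_j(x_j))² ≤ (8/h_min)·∑_{j=1}^{N} ∫_{x_{j−1}}^{x_j} v_j(s)² ds + 4·h_max·∑_{j=1}^{N} ∫_{x_{j−1}}^{x_j} v_j′(s)² ds. -/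
open MeasureTheory intervalIntegral

/-! On an element `[c, d]` of length `h`, every value of an `H¹` function satisfies
`‖u p‖² ≤ 2 ‖u s‖² + 2 ‖u s - u p‖² ≤ 2 ‖u s‖² + 2 |s - p| ∫ ‖u'‖²` by Cauchy–Schwarz, and averaging
over `s` gives the scaled trace inequality `‖u p‖² ≤ (2 / h) ∫ ‖u‖² + h ∫ ‖u'‖²`. A jump is
controlled by two traces, and each element contributes at most its two endpoint traces to the sum of
the squared jumps. -/

section

open Set

variable {F : Type*} [SeminormedAddCommGroup F]

lemma norm_sub_sq_le_two_mul (y z : F) : ‖y - z‖ ^ 2 ≤ 2 * (‖y‖ ^ 2 + ‖z‖ ^ 2) :=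
  (pow_le_pow_left₀ (norm_nonneg _) (norm_sub_le y z) 2).trans add_sq_le

lemma sum_norm_sub_sq_le_sum_endpoints (N : ℕ) (l r : ℕ → F) :
    ∑ j ∈ Finset.Icc 1 (N - 1), ‖l (j + 1) - r j‖ ^ 2
      ≤ ∑ j ∈ Finset.Icc 1 N, 2 * (‖l j‖ ^ 2 + ‖r j‖ ^ 2) := by
  have sum_left : ∑ j ∈ Finset.Icc 1 (N - 1), ‖l (j + 1)‖ ^ 2
      ≤ ∑ j ∈ Finset.Icc 1 N, ‖l j‖ ^ 2 := by
    refine (Finset.sum_map (Finset.Icc 1 (N - 1)) (addRightEmbedding 1)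
      fun j => ‖l j‖ ^ 2).symm.trans_le ?_
    refine Finset.sum_le_sum_of_subset_of_nonneg (fun j hj => ?_) fun j _ _ => sq_nonneg _
    simp only [Finset.map_add_right_Icc, Finset.mem_Icc] at hj ⊢
    omega
  have sum_right : ∑ j ∈ Finset.Icc 1 (N - 1), ‖r j‖ ^ 2 ≤ ∑ j ∈ Finset.Icc 1 N, ‖r j‖ ^ 2 :=
    Finset.sum_le_sum_of_subset_of_nonneg (Finset.Icc_subset_Icc_right (N.sub_le 1))
      fun j _ _ => sq_nonneg _
  calc ∑ j ∈ Finset.Icc 1 (N - 1), ‖l (j + 1) - r j‖ ^ 2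
      ≤ ∑ j ∈ Finset.Icc 1 (N - 1), 2 * (‖l (j + 1)‖ ^ 2 + ‖r j‖ ^ 2) :=
        Finset.sum_le_sum fun j _ => norm_sub_sq_le_two_mul _ _
    _ ≤ ∑ j ∈ Finset.Icc 1 N, 2 * (‖l j‖ ^ 2 + ‖r j‖ ^ 2) := by
      simp only [← Finset.mul_sum, Finset.sum_add_distrib]
      gcongr

lemma integral_abs_sub_of_mem_Icc {c d p : ℝ} (hp : p ∈ Icc c d) :
    ∫ s in c..d, |s - p| = ((p - c) ^ 2 + (d - p) ^ 2) / 2 := by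
  have hint (y z : ℝ) : IntervalIntegrable (fun s => |s - p|) volume y z :=
    Continuous.intervalIntegrable (by fun_prop) y z
  have integral_uIoc (y : ℝ) : ∫ s in uIoc p y, |s - p| = (y - p) ^ 2 / 2 := by
    simpa [one_add_one_eq_two] using integral_pow_abs_sub_uIoc (a := p) (b := y) 1
  calc ∫ s in c..d, |s - p| = (∫ s in c..p, |s - p|) + ∫ s in p..d, |s - p| :=
        (integral_add_adjacent_intervals (hint c p) (hint p d)).symm
    _ = (∫ s in uIoc p c, |s - p|) + ∫ s in uIoc p d, |s - p| := by
        rw [uIoc_of_ge hp.1, uIoc_of_le hp.2, integral_of_le hp.1, integral_of_le hp.2]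
    _ = ((p - c) ^ 2 + (d - p) ^ 2) / 2 := by rw [integral_uIoc, integral_uIoc]; ring

variable {E : Type*} [NormedAddCommGroup E]

lemma memLp_restrict_of_isCompact_of_continuousOn {X : Type*} [TopologicalSpace X]
    [MeasurableSpace X] [OpensMeasurableSpace X] [T2Space X] [SecondCountableTopologyEither X E]
    {μ : Measure X} [IsFiniteMeasureOnCompacts μ] {K : Set X} (hK : IsCompact K) {f : X → E}
    (hf : ContinuousOn f K) (q : ENNReal) : MemLp f q (μ.restrict K) := by
  have : IsFiniteMeasure (μ.restrict K) := isFiniteMeasure_restrict.mpr hK.measure_ne_top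
  obtain ⟨C, hC⟩ := hK.exists_bound_of_continuousOn hf
  exact .of_bound (hf.aestronglyMeasurable hK.measurableSet) C
    (ae_restrict_of_forall_mem hK.measurableSet hC)

variable [NormedSpace ℝ E]

lemma norm_integral_sq_le_measureReal_mul_integral_norm_sq {α : Type*} [MeasurableSpace α]
    {μ : Measure α} [IsFiniteMeasure μ] {f : α → E} (hf : MemLp f 2 μ) :
    ‖∫ x, f x ∂μ‖ ^ 2 ≤ μ.real univ * ∫ x, ‖f x‖ ^ 2 ∂μ := by
  rcases eq_zero_or_neZero μ with rfl | _
  · simp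
  have jensen : (⨍ x, ‖f x‖ ∂μ) ^ 2 ≤ ⨍ x, ‖f x‖ ^ 2 ∂μ :=
    (Even.convexOn_pow even_two).map_average_le (by fun_prop) isClosed_univ (by simp)
      (hf.norm.integrable one_le_two) hf.norm.integrable_sq
  have hμ : 0 < μ.real univ := measureReal_univ_pos
  simp only [average_eq, smul_eq_mul] at jensen
  calc ‖∫ x, f x ∂μ‖ ^ 2 ≤ (∫ x, ‖f x‖ ∂μ) ^ 2 := by gcongr; exact norm_integral_le_integral_norm f
    _ = μ.real univ ^ 2 * ((μ.real univ)⁻¹ * ∫ x, ‖f x‖ ∂μ) ^ 2 := by field_simp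
    _ ≤ μ.real univ ^ 2 * ((μ.real univ)⁻¹ * ∫ x, ‖f x‖ ^ 2 ∂μ) := by gcongr
    _ = μ.real univ * ∫ x, ‖f x‖ ^ 2 ∂μ := by field_simp

/-- Membership of `u` in the Sobolev space `H¹(c, d; E)` with weak derivative `u'`, the function
space of a single element. It is encoded through the absolutely continuous representative: `u` is a
primitive on `[c, d]` of the square-integrable function `u'`. -/
structure IsH1On [CompleteSpace E] (u u' : ℝ → E) (c d : ℝ) : Prop where
  memLp : MemLp u' 2 (volume.restrict (Icc c d))
  integral_eq_sub : ∀ ⦃s⦄, s ∈ Icc c d → ∀ ⦃t⦄, t ∈ Icc c d → ∫ r in s..t, u' r = u t - u s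

variable [CompleteSpace E]

namespace IsH1On

variable {u u' : ℝ → E} {c d p s t : ℝ}

lemma of_hasDerivWithinAt (hu : ∀ s ∈ Icc c d, HasDerivWithinAt u (u' s) (Icc c d) s)
    (hu' : MemLp u' 2 (volume.restrict (Icc c d))) : IsH1On u u' c d where
  memLp := hu'
  integral_eq_sub s hs t ht := by
    have hst : uIcc s t ⊆ Icc c d := uIcc_subset_Icc hs ht
    refine integral_eq_sub_of_hasDeriv_right (fun r hr => ?_) (fun r hr => ?_) ?_
    · exact (hu r (hst hr)).continuousWithinAt.mono hst
    · have hr' : r ∈ Ioo c d := Ioo_subset_Ioo (le_min hs.1 ht.1) (max_le hs.2 ht.2) hr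
      exact ((hu r (Ioo_subset_Icc_self hr')).hasDerivAt
        (Icc_mem_nhds hr'.1 hr'.2)).hasDerivWithinAt
    · exact IntegrableOn.intervalIntegrable
        (IntegrableOn.mono_set (hu'.integrable one_le_two) hst)

lemma continuousOn (h : IsH1On u u' c d) : ContinuousOn u (Icc c d) := by
  intro t ht
  have hcd : c ≤ d := ht.1.trans ht.2
  have hprim : ContinuousOn (fun t => ∫ r in c..t, u' r) (Icc c d) := by
    rw [← uIcc_of_le hcd]
    refine continuousOn_primitive_interval ?_
    rw [uIcc_of_le hcd]
    exact h.memLp.integrable one_le_two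
  refine (hprim.add (continuousOn_const (c := u c))).congr (fun r hr => ?_) t ht
  simp only [Pi.add_apply, h.integral_eq_sub (left_mem_Icc.mpr hcd) hr, sub_add_cancel]

lemma norm_sub_sq_le (h : IsH1On u u' c d) (hs : s ∈ Icc c d) (ht : t ∈ Icc c d) :
    ‖u t - u s‖ ^ 2 ≤ |t - s| * ∫ r in c..d, ‖u' r‖ ^ 2 := by
  have hcd : c ≤ d := hs.1.trans hs.2
  have hst : uIoc s t ⊆ Icc c d := uIoc_subset_uIcc.trans (uIcc_subset_Icc hs ht)
  have : IsFiniteMeasure (volume.restrict (uIoc s t)) :=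
    isFiniteMeasure_restrict.mpr (by simp [Real.volume_uIoc])
  calc ‖u t - u s‖ ^ 2 = ‖∫ r in uIoc s t, u' r‖ ^ 2 := by
        rw [← h.integral_eq_sub hs ht, norm_intervalIntegral_eq]
    _ ≤ volume.real (uIoc s t) * ∫ r in uIoc s t, ‖u' r‖ ^ 2 := by
        simpa using norm_integral_sq_le_measureReal_mul_integral_norm_sq
          (h.memLp.mono_measure (Measure.restrict_mono_set volume hst))
    _ ≤ |t - s| * ∫ r in Icc c d, ‖u' r‖ ^ 2 := by
        rw [Measure.real, Real.volume_uIoc, ENNReal.toReal_ofReal (abs_nonneg _)]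
        exact mul_le_mul_of_nonneg_left (setIntegral_mono_set h.memLp.norm.integrable_sq
          (ae_of_all _ fun r => sq_nonneg _) hst.eventuallyLE) (abs_nonneg _)
    _ = |t - s| * ∫ r in c..d, ‖u' r‖ ^ 2 := by
        rw [integral_of_le hcd, integral_Icc_eq_integral_Ioc]

lemma length_mul_norm_sq_le (h : IsH1On u u' c d) (hp : p ∈ Icc c d) :
    (d - c) * ‖u p‖ ^ 2
      ≤ 2 * (∫ s in c..d, ‖u s‖ ^ 2) + (d - c) ^ 2 * ∫ s in c..d, ‖u' s‖ ^ 2 := by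
  have hcd : c ≤ d := hp.1.trans hp.2
  set A := ∫ s in c..d, ‖u' s‖ ^ 2
  have hA : 0 ≤ A := integral_nonneg hcd fun s _ => sq_nonneg _
  have hint_u : IntervalIntegrable (fun s => 2 * ‖u s‖ ^ 2) volume c d :=
    ((h.continuousOn.norm.pow 2).intervalIntegrable_of_Icc hcd).const_mul 2
  have hint_abs : IntervalIntegrable (fun s => 2 * A * |s - p|) volume c d :=
    Continuous.intervalIntegrable (by fun_prop) c d
  have sq_add_sq_le : (p - c) ^ 2 + (d - p) ^ 2 ≤ (d - c) ^ 2 := by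
    linear_combination 2 * mul_nonneg (sub_nonneg.mpr hp.1) (sub_nonneg.mpr hp.2)
  have pointwise : ∀ s ∈ Icc c d, ‖u p‖ ^ 2 ≤ 2 * ‖u s‖ ^ 2 + 2 * A * |s - p| := fun s hs =>
    calc ‖u p‖ ^ 2 = ‖u s - (u s - u p)‖ ^ 2 := by rw [sub_sub_cancel]
      _ ≤ 2 * (‖u s‖ ^ 2 + ‖u s - u p‖ ^ 2) := norm_sub_sq_le_two_mul _ _
      _ ≤ 2 * (‖u s‖ ^ 2 + |s - p| * A) := by gcongr; exact h.norm_sub_sq_le hp hs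
      _ = 2 * ‖u s‖ ^ 2 + 2 * A * |s - p| := by ring
  calc (d - c) * ‖u p‖ ^ 2 = ∫ _ in c..d, ‖u p‖ ^ 2 := by simp
    _ ≤ ∫ s in c..d, (2 * ‖u s‖ ^ 2 + 2 * A * |s - p|) :=
        integral_mono_on hcd intervalIntegrable_const (hint_u.add hint_abs) pointwise
    _ = 2 * (∫ s in c..d, ‖u s‖ ^ 2) + A * ((p - c) ^ 2 + (d - p) ^ 2) := by
        rw [integral_add hint_u hint_abs, intervalIntegral.integral_const_mul,
          intervalIntegral.integral_const_mul, integral_abs_sub_of_mem_Icc hp]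
        ring
    _ ≤ 2 * (∫ s in c..d, ‖u s‖ ^ 2) + (d - c) ^ 2 * A := by
        rw [mul_comm A]
        gcongr

theorem scaled_trace_inequality (h : IsH1On u u' c d) (hcd : c < d) (hp : p ∈ Icc c d) :
    ‖u p‖ ^ 2
      ≤ 2 / (d - c) * (∫ s in c..d, ‖u s‖ ^ 2) + (d - c) * ∫ s in c..d, ‖u' s‖ ^ 2 := by
  have hlen : 0 < d - c := sub_pos.mpr hcd
  refine le_of_mul_le_mul_left ((h.length_mul_norm_sq_le hp).trans_eq ?_) hlen
  field_simp

end IsH1On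

theorem jump_estimate_broken_H1_general {N : ℕ} {x : ℕ → ℝ} {hmin hmax : ℝ} (hmin_pos : 0 < hmin)
    (hmin_le : ∀ j ∈ Finset.Icc 1 N, hmin ≤ x j - x (j - 1))
    (le_hmax : ∀ j ∈ Finset.Icc 1 N, x j - x (j - 1) ≤ hmax) {v v' : ℕ → ℝ → E}
    (hv : ∀ j ∈ Finset.Icc 1 N, IsH1On (v j) (v' j) (x (j - 1)) (x j)) :
    ∑ j ∈ Finset.Icc 1 (N - 1), ‖v (j + 1) (x j) - v j (x j)‖ ^ 2
      ≤ 8 / hmin * (∑ j ∈ Finset.Icc 1 N, ∫ s in x (j - 1)..x j, ‖v j s‖ ^ 2)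
        + 4 * hmax * ∑ j ∈ Finset.Icc 1 N, ∫ s in x (j - 1)..x j, ‖v' j s‖ ^ 2 := by
  refine (sum_norm_sub_sq_le_sum_endpoints N (fun j => v j (x (j - 1))) fun j => v j (x j)).trans ?_
  rw [Finset.mul_sum, Finset.mul_sum, ← Finset.sum_add_distrib]
  refine Finset.sum_le_sum fun j hj => ?_
  have hlt : x (j - 1) < x j := sub_pos.mp (hmin_pos.trans_le (hmin_le j hj))
  have hI : 0 ≤ ∫ s in x (j - 1)..x j, ‖v j s‖ ^ 2 :=
    integral_nonneg hlt.le fun s _ => sq_nonneg _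
  have hI' : 0 ≤ ∫ s in x (j - 1)..x j, ‖v' j s‖ ^ 2 :=
    integral_nonneg hlt.le fun s _ => sq_nonneg _
  calc 2 * (‖v j (x (j - 1))‖ ^ 2 + ‖v j (x j)‖ ^ 2)
      ≤ 8 / (x j - x (j - 1)) * (∫ s in x (j - 1)..x j, ‖v j s‖ ^ 2)
          + 4 * (x j - x (j - 1)) * ∫ s in x (j - 1)..x j, ‖v' j s‖ ^ 2 := by
        linear_combination 2 * (hv j hj).scaled_trace_inequality hlt (left_mem_Icc.mpr hlt.le)
          + 2 * (hv j hj).scaled_trace_inequality hlt (right_mem_Icc.mpr hlt.le)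
    _ ≤ 8 / hmin * (∫ s in x (j - 1)..x j, ‖v j s‖ ^ 2)
          + 4 * hmax * ∫ s in x (j - 1)..x j, ‖v' j s‖ ^ 2 := by
        gcongr
        exacts [hmin_le j hj, le_hmax j hj]

end

/-- Jump estimate for piecewise `C¹` functions on a partition
`a = x₀ < x₁ < ⋯ < x_N = b`: the squared Euclidean norm of the interior jumps
is bounded by `(8/h_min)·‖v‖²_{L²} + 4·h_max·‖v'‖²_{L²(𝒯)}`. -/
theorem jump_estimate_broken_H1
    (N : ℕ) (hN : 1 ≤ N) (a b : ℝ) (x : ℕ → ℝ)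
    (ha : x 0 = a) (hb : x N = b)
    (hx : ∀ j, 1 ≤ j → j ≤ N → x (j - 1) < x j)
    (hmin hmax : ℝ)
    (hhmin : hmin = (Finset.Icc 1 N).inf'
      ⟨1, Finset.mem_Icc.mpr ⟨le_refl 1, hN⟩⟩ (fun j => x j - x (j - 1)))
    (hhmax : hmax = (Finset.Icc 1 N).sup'
      ⟨1, Finset.mem_Icc.mpr ⟨le_refl 1, hN⟩⟩ (fun j => x j - x (j - 1)))
    (v v' : ℕ → ℝ → ℝ)
    (hv : ∀ j, 1 ≤ j → j ≤ N → ∀ s ∈ Set.Icc (x (j - 1)) (x j),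
      HasDerivWithinAt (v j) (v' j s) (Set.Icc (x (j - 1)) (x j)) s)
    (hv' : ∀ j, 1 ≤ j → j ≤ N → ContinuousOn (v' j) (Set.Icc (x (j - 1)) (x j))) :
    (∑ j ∈ Finset.Icc 1 (N - 1), (v (j + 1) (x j) - v j (x j)) ^ 2)
      ≤ (8 / hmin) * (∑ j ∈ Finset.Icc 1 N, ∫ s in (x (j - 1))..(x j), (v j s) ^ 2)
        + 4 * hmax * (∑ j ∈ Finset.Icc 1 N, ∫ s in (x (j - 1))..(x j), (v' j s) ^ 2) := by
  have hmin_pos : 0 < hmin := hhmin ▸ (Finset.lt_inf'_iff _).mpr fun j hj =>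
    sub_pos.mpr (hx j (Finset.mem_Icc.mp hj).1 (Finset.mem_Icc.mp hj).2)
  simpa only [Real.norm_eq_abs, sq_abs] using jump_estimate_broken_H1_general hmin_pos
    (fun j hj => hhmin.trans_le (Finset.inf'_le _ hj))
    (fun j hj => (Finset.le_sup' (fun j => x j - x (j - 1)) hj).trans_eq hhmax.symm)
    fun j hj => have ⟨h1j, hjN⟩ := Finset.mem_Icc.mp hj
      .of_hasDerivWithinAt (hv j h1j hjN)
        (memLp_restrict_of_isCompact_of_continuousOn isCompact_Icc (hv' j h1j hjN) 2)
end

section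
/- Let a = x₀ < x₁ < ⋯ < x_N = b be a partition of [a,b] with element lengths h_j = x_j − x_{j−1} and h_max = max_j h_j, and let v_j : [x_{j−1}, x_j] → ℝ be continuously differentiable for j = 1,…,N. Then ∑_{j=1}^{N} ∫_{x_{j−1}}^{x_j} v_j(s)² ds ≤ 2·h_max²·∑_{j=1}^{N} ∫_{x_{j−1}}^{x_j} v_j′(s)² ds + 2·∑_{j=1}^{N} h_j·v_j(x_{j−1})². -/
open MeasureTheory intervalIntegral

/-! On one element, `v s - v c = ∫ t in c..s, v' t`, so Cauchy–Schwarz against the constant `1`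
bounds `‖v s - v c‖²` by `h * ∫ ‖v'‖²`, uniformly in `s`. Combine this with
`‖v s‖² ≤ 2 * (‖v s - v c‖² + ‖v c‖²)`, integrate over `s`, which costs one more factor `h`,
and sum over the elements. -/

theorem norm_integral_sq_le_measureReal_univ_mul {α E : Type*} [MeasurableSpace α]
    {μ : Measure α} [IsFiniteMeasure μ] [NormedAddCommGroup E] [NormedSpace ℝ E] {f : α → E}
    (hf : MemLp f 2 μ) :
    ‖∫ a, f a ∂μ‖ ^ 2 ≤ μ.real Set.univ * ∫ a, ‖f a‖ ^ 2 ∂μ := by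
  have hf_nonneg : 0 ≤ ∫ a, ‖f a‖ ^ 2 ∂μ := integral_nonneg fun a => sq_nonneg ‖f a‖
  have hnorm : MemLp (fun a => ‖f a‖) (ENNReal.ofReal 2) μ := by
    simpa only [ENNReal.ofReal_ofNat] using hf.norm
  have holder : ∫ a, ‖f a‖ ∂μ ≤ √(∫ a, ‖f a‖ ^ 2 ∂μ) * √(μ.real Set.univ) := by
    simpa [Real.sqrt_eq_rpow] using
      integral_mul_norm_le_Lp_mul_Lq .two_two hnorm (memLp_const (1 : ℝ))
  calc ‖∫ a, f a ∂μ‖ ^ 2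
      ≤ (√(∫ a, ‖f a‖ ^ 2 ∂μ) * √(μ.real Set.univ)) ^ 2 := by
        gcongr
        exact (norm_integral_le_integral_norm f).trans holder
    _ = μ.real Set.univ * ∫ a, ‖f a‖ ^ 2 ∂μ := by
        rw [mul_pow, Real.sq_sqrt hf_nonneg, Real.sq_sqrt measureReal_nonneg, mul_comm]

variable {E : Type*} [NormedAddCommGroup E] [NormedSpace ℝ E]

/-- `f` is the continuous representative of a function in the Sobolev space `H¹(c, d; E)` and `g`
is its weak derivative: `g` is square integrable and `f` is a primitive of `g` on `[c, d]`. -/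
structure HasL2DerivOn (f g : ℝ → E) (c d : ℝ) : Prop where
  memLp : MemLp g 2 (volume.restrict (Set.Ioc c d))
  integral_eq_sub : ∀ s ∈ Set.Icc c d, ∫ t in c..s, g t = f s - f c

namespace HasL2DerivOn

variable {f g : ℝ → E} {c d s : ℝ}

theorem of_hasDerivAt [CompleteSpace E] (hf : ContinuousOn f (Set.Icc c d))
    (hderiv : ∀ t ∈ Set.Ioo c d, HasDerivAt f (g t) t)
    (hg : MemLp g 2 (volume.restrict (Set.Ioc c d))) : HasL2DerivOn f g c d where
  memLp := hg
  integral_eq_sub s hs := by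
    have hg_int : IntegrableOn g (Set.Ioc c d) := hg.integrable one_le_two
    exact integral_eq_sub_of_hasDerivAt_of_le hs.1 (hf.mono (Set.Icc_subset_Icc_right hs.2))
      (fun t ht => hderiv t ⟨ht.1, ht.2.trans_le hs.2⟩)
      ((intervalIntegrable_iff_integrableOn_Ioc_of_le hs.1).2
        (hg_int.mono_set (Set.Ioc_subset_Ioc_right hs.2)))

theorem of_hasDerivWithinAt [CompleteSpace E]
    (hf : ∀ t ∈ Set.Icc c d, HasDerivWithinAt f (g t) (Set.Icc c d) t)
    (hg : ContinuousOn g (Set.Icc c d)) : HasL2DerivOn f g c d := by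
  have hg_memLp : MemLp g 2 (volume.restrict (Set.Icc c d)) :=
    (memLp_two_iff_integrable_sq_norm (hg.aestronglyMeasurable measurableSet_Icc)).2
      (hg.norm.pow 2).integrableOn_Icc
  exact of_hasDerivAt (fun t ht => (hf t ht).continuousWithinAt)
    (fun t ht => (hf t (Set.Ioo_subset_Icc_self ht)).hasDerivAt (Icc_mem_nhds ht.1 ht.2))
    (hg_memLp.mono_measure (Measure.restrict_mono_set volume Set.Ioc_subset_Icc_self))

theorem continuousOn (hf : HasL2DerivOn f g c d) : ContinuousOn f (Set.Icc c d) := by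
  have hg_int : IntegrableOn g (Set.Icc c d) :=
    (integrableOn_Icc_iff_integrableOn_Ioc).2 (hf.memLp.integrable one_le_two)
  have hprimitive : ContinuousOn (fun s => f c + ∫ t in Set.Ioc c s, g t) (Set.Icc c d) :=
    continuousOn_const.add (continuousOn_primitive hg_int)
  refine hprimitive.congr fun s hs => ?_
  simp only [← integral_of_le hs.1, hf.integral_eq_sub s hs, add_sub_cancel]

theorem norm_sub_sq_le (hf : HasL2DerivOn f g c d) (hs : s ∈ Set.Icc c d) :
    ‖f s - f c‖ ^ 2 ≤ (d - c) * ∫ t in c..d, ‖g t‖ ^ 2 := by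
  have hsub : Set.Ioc c s ⊆ Set.Ioc c d := Set.Ioc_subset_Ioc_right hs.2
  have hcd : c ≤ d := hs.1.trans hs.2
  calc ‖f s - f c‖ ^ 2
      = ‖∫ t in Set.Ioc c s, g t‖ ^ 2 := by
        rw [← hf.integral_eq_sub s hs, integral_of_le hs.1]
    _ ≤ (s - c) * ∫ t in Set.Ioc c s, ‖g t‖ ^ 2 := by
        simpa [hs.1] using norm_integral_sq_le_measureReal_univ_mul
          (hf.memLp.mono_measure (Measure.restrict_mono_set volume hsub))
    _ ≤ (d - c) * ∫ t in Set.Ioc c d, ‖g t‖ ^ 2 := by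
        gcongr ?_ * ?_
        · exact sub_le_sub_right hs.2 c
        · exact setIntegral_mono_set (hf.memLp.integrable_norm_pow two_ne_zero)
            (ae_of_all _ fun t => sq_nonneg ‖g t‖) hsub.eventuallyLE
    _ = (d - c) * ∫ t in c..d, ‖g t‖ ^ 2 := by rw [integral_of_le hcd]

theorem norm_sq_le (hf : HasL2DerivOn f g c d) (hs : s ∈ Set.Icc c d) :
    ‖f s‖ ^ 2 ≤ 2 * ((d - c) * (∫ t in c..d, ‖g t‖ ^ 2) + ‖f c‖ ^ 2) :=
  calc ‖f s‖ ^ 2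
      ≤ (‖f s - f c‖ + ‖f c‖) ^ 2 := by
        gcongr
        exact norm_le_norm_sub_add (f s) (f c)
    _ ≤ 2 * (‖f s - f c‖ ^ 2 + ‖f c‖ ^ 2) := add_sq_le
    _ ≤ 2 * ((d - c) * (∫ t in c..d, ‖g t‖ ^ 2) + ‖f c‖ ^ 2) := by
        gcongr
        exact hf.norm_sub_sq_le hs

theorem integral_norm_sq_le (hf : HasL2DerivOn f g c d) (hcd : c ≤ d) :
    ∫ s in c..d, ‖f s‖ ^ 2
      ≤ 2 * (d - c) ^ 2 * (∫ s in c..d, ‖g s‖ ^ 2) + 2 * ((d - c) * ‖f c‖ ^ 2) :=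
  calc ∫ s in c..d, ‖f s‖ ^ 2
      ≤ ∫ _ in c..d, 2 * ((d - c) * (∫ t in c..d, ‖g t‖ ^ 2) + ‖f c‖ ^ 2) :=
        integral_mono_on hcd ((hf.continuousOn.norm.pow 2).intervalIntegrable_of_Icc hcd)
          intervalIntegrable_const fun _ hs => hf.norm_sq_le hs
    _ = 2 * (d - c) ^ 2 * (∫ s in c..d, ‖g s‖ ^ 2) + 2 * ((d - c) * ‖f c‖ ^ 2) := by
        rw [intervalIntegral.integral_const, smul_eq_mul]
        ring

end HasL2DerivOn

theorem broken_poincare_friedrichs_general [CompleteSpace E] {ι : Type*} (S : Finset ι)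
    (c d : ι → ℝ) (hcd : ∀ i ∈ S, c i ≤ d i) {h : ℝ} (hh : ∀ i ∈ S, d i - c i ≤ h)
    (v v' : ι → ℝ → E) (hv : ∀ i ∈ S, HasL2DerivOn (v i) (v' i) (c i) (d i)) :
    (∑ i ∈ S, ∫ s in (c i)..(d i), ‖v i s‖ ^ 2)
      ≤ 2 * h ^ 2 * (∑ i ∈ S, ∫ s in (c i)..(d i), ‖v' i s‖ ^ 2)
        + 2 * (∑ i ∈ S, (d i - c i) * ‖v i (c i)‖ ^ 2) := by
  rw [Finset.mul_sum, Finset.mul_sum, ← Finset.sum_add_distrib]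
  refine Finset.sum_le_sum fun i hi => ((hv i hi).integral_norm_sq_le (hcd i hi)).trans ?_
  have hlength : 0 ≤ d i - c i := sub_nonneg.2 (hcd i hi)
  have hv'_nonneg : 0 ≤ ∫ s in (c i)..(d i), ‖v' i s‖ ^ 2 :=
    intervalIntegral.integral_nonneg (hcd i hi) fun s _ => sq_nonneg ‖v' i s‖
  gcongr
  exact hh i hi

/-- Broken Poincaré–Friedrichs estimate for piecewise `C¹` functions on a
partition `a = x₀ < x₁ < ⋯ < x_N = b`:
`‖v‖²_{L²} ≤ 2·h_max²·‖v'‖²_{L²(𝒯)} + 2·|v̂|_h²`, where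
`|v̂|_h² = ∑_j h_j·v_j(x_{j−1})²`. -/
theorem broken_poincare_friedrichs
    (N : ℕ) (hN : 1 ≤ N) (a b : ℝ) (x : ℕ → ℝ)
    (ha : x 0 = a) (hb : x N = b)
    (hx : ∀ j, 1 ≤ j → j ≤ N → x (j - 1) < x j)
    (hmax : ℝ)
    (hhmax : hmax = (Finset.Icc 1 N).sup'
      ⟨1, Finset.mem_Icc.mpr ⟨le_refl 1, hN⟩⟩ (fun j => x j - x (j - 1)))
    (v v' : ℕ → ℝ → ℝ)
    (hv : ∀ j, 1 ≤ j → j ≤ N → ∀ s ∈ Set.Icc (x (j - 1)) (x j),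
      HasDerivWithinAt (v j) (v' j s) (Set.Icc (x (j - 1)) (x j)) s)
    (hv' : ∀ j, 1 ≤ j → j ≤ N → ContinuousOn (v' j) (Set.Icc (x (j - 1)) (x j))) :
    (∑ j ∈ Finset.Icc 1 N, ∫ s in (x (j - 1))..(x j), (v j s) ^ 2)
      ≤ 2 * hmax ^ 2 * (∑ j ∈ Finset.Icc 1 N, ∫ s in (x (j - 1))..(x j), (v' j s) ^ 2)
        + 2 * (∑ j ∈ Finset.Icc 1 N, (x j - x (j - 1)) * (v j (x (j - 1))) ^ 2) := by
  have hC1 : ∀ j ∈ Finset.Icc 1 N, HasL2DerivOn (v j) (v' j) (x (j - 1)) (x j) := fun j hj =>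
    have ⟨hj1, hjN⟩ := Finset.mem_Icc.mp hj
    .of_hasDerivWithinAt (hv j hj1 hjN) (hv' j hj1 hjN)
  simpa only [Real.norm_eq_abs, sq_abs] using
    broken_poincare_friedrichs_general (Finset.Icc 1 N) (fun j => x (j - 1)) x
      (fun j hj => (hx j (Finset.mem_Icc.mp hj).1 (Finset.mem_Icc.mp hj).2).le)
      (fun j hj => hhmax ▸ Finset.le_sup' (fun j => x j - x (j - 1)) hj) v v' hC1
end

section
/- Let a = x₀ < x₁ < ⋯ < x_N = b be a partition of [a,b] with element lengths h_j = x_j − x_{j−1} and h_max = max_j h_j, and let v_j : [x_{j−1}, x_j] → ℝ be continuously differentiable for j = 1,…,N. Then ∑_{j=1}^{N} h_j·v_j(x_{j−1})² ≤ 2·∑_{j=1}^{N} ∫_{x_{j−1}}^{x_j} v_j(s)² ds + h_max²·∑_{j=1}^{N} ∫_{x_{j−1}}^{x_j} v_j′(s)² ds. -/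
open MeasureTheory intervalIntegral

section

variable {E : Type*} [NormedAddCommGroup E] [InnerProductSpace ℝ E]

lemma norm_sq_add_two_mul_mul_inner_le {c h : ℝ} (hc : |c| ≤ h) (x y : E) :
    ‖x‖ ^ 2 + 2 * c * inner ℝ x y ≤ 2 * ‖x‖ ^ 2 + h ^ 2 * ‖y‖ ^ 2 := by
  have young : 2 * c * inner ℝ x y ≤ ‖x‖ ^ 2 + c ^ 2 * ‖y‖ ^ 2 := by
    have hsq := norm_sub_sq_real x (c • y)
    rw [real_inner_smul_right, norm_smul, mul_pow, Real.norm_eq_abs, sq_abs] at hsq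
    linarith [sq_nonneg ‖x - c • y‖]
  have hch : c ^ 2 ≤ h ^ 2 := sq_le_sq.mpr (hc.trans (le_abs_self h))
  linarith [mul_le_mul_of_nonneg_right hch (sq_nonneg ‖y‖)]

/- The left-hand side is the increment over `[a, b]` of `t ↦ (t - b) * ‖f t‖ ^ 2`, which vanishes
at `b`. Its derivative is dominated by an integrable function instead of being integrated, since
nothing makes `inner ℝ (f t) (f' t)` measurable in `t`. -/
lemma sub_mul_norm_sq_left_le {a b : ℝ} (hab : a ≤ b) {f f' : ℝ → E}
    (hf : ContinuousOn f (Set.Icc a b))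
    (hderiv : ∀ t ∈ Set.Ioo a b, HasDerivWithinAt f (f' t) (Set.Ioi t) t)
    (hf' : IntervalIntegrable (fun t => ‖f' t‖ ^ 2) volume a b) :
    (b - a) * ‖f a‖ ^ 2 ≤
      2 * (∫ t in a..b, ‖f t‖ ^ 2) + (b - a) ^ 2 * ∫ t in a..b, ‖f' t‖ ^ 2 := by
  have hf_int : IntervalIntegrable (fun t => 2 * ‖f t‖ ^ 2) volume a b :=
    ((hf.norm.pow 2).intervalIntegrable_of_Icc hab).const_mul 2
  have hf'_int := hf'.const_mul ((b - a) ^ 2)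
  have hweighted_deriv : ∀ t ∈ Set.Ioo a b, HasDerivWithinAt (fun t => (t - b) * ‖f t‖ ^ 2)
      (‖f t‖ ^ 2 + 2 * (t - b) * inner ℝ (f t) (f' t)) (Set.Ioi t) t := fun t ht =>
    (((hasDerivWithinAt_id t _).sub_const b).fun_mul (hderiv t ht).norm_sq).congr_deriv
      (by simp only [id]; ring)
  calc (b - a) * ‖f a‖ ^ 2
      = (b - b) * ‖f b‖ ^ 2 - (a - b) * ‖f a‖ ^ 2 := by ring
    _ ≤ ∫ t in a..b, (2 * ‖f t‖ ^ 2 + (b - a) ^ 2 * ‖f' t‖ ^ 2) := by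
      refine sub_le_integral_of_hasDeriv_right_of_le hab (by fun_prop) hweighted_deriv
        ((intervalIntegrable_iff_integrableOn_Icc_of_le hab).mp (hf_int.add hf'_int))
        fun t ht => norm_sq_add_two_mul_mul_inner_le ?_ _ _
      exact abs_le.mpr ⟨by linarith [ht.1], by linarith [ht.1, ht.2]⟩
    _ = 2 * (∫ t in a..b, ‖f t‖ ^ 2) + (b - a) ^ 2 * ∫ t in a..b, ‖f' t‖ ^ 2 := by
      rw [intervalIntegral.integral_add hf_int hf'_int, intervalIntegral.integral_const_mul,
        intervalIntegral.integral_const_mul]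

theorem nodal_values_le_broken_H1_general {ι : Type*} {s : Finset ι} {l r : ι → ℝ} {h : ℝ}
    (hlr : ∀ j ∈ s, l j ≤ r j) (hh : ∀ j ∈ s, r j - l j ≤ h) {v v' : ι → ℝ → E}
    (hv : ∀ j ∈ s, ContinuousOn (v j) (Set.Icc (l j) (r j)))
    (hderiv : ∀ j ∈ s, ∀ t ∈ Set.Ioo (l j) (r j),
      HasDerivWithinAt (v j) (v' j t) (Set.Ioi t) t)
    (hv' : ∀ j ∈ s, IntervalIntegrable (fun t => ‖v' j t‖ ^ 2) volume (l j) (r j)) :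
    ∑ j ∈ s, (r j - l j) * ‖v j (l j)‖ ^ 2 ≤
      2 * (∑ j ∈ s, ∫ t in (l j)..(r j), ‖v j t‖ ^ 2) +
        h ^ 2 * ∑ j ∈ s, ∫ t in (l j)..(r j), ‖v' j t‖ ^ 2 := by
  rw [Finset.mul_sum, Finset.mul_sum, ← Finset.sum_add_distrib]
  refine Finset.sum_le_sum fun j hj => ?_
  have hlen : 0 ≤ r j - l j := sub_nonneg.mpr (hlr j hj)
  have hnonneg : 0 ≤ ∫ t in (l j)..(r j), ‖v' j t‖ ^ 2 :=
    integral_nonneg (hlr j hj) fun t _ => sq_nonneg ‖v' j t‖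
  refine (sub_mul_norm_sq_left_le (hlr j hj) (hv j hj) (hderiv j hj) (hv' j hj)).trans ?_
  gcongr
  exact hh j hj

end

/-- Converse nodal-value estimate for piecewise `C¹` functions on a partition
`a = x₀ < x₁ < ⋯ < x_N = b`:
`|v̂|_h² ≤ 2·‖v‖²_{L²} + h_max²·‖v'‖²_{L²(𝒯)}`, where
`|v̂|_h² = ∑_j h_j·v_j(x_{j−1})²`. -/
theorem nodal_values_le_broken_H1
    (N : ℕ) (hN : 1 ≤ N) (a b : ℝ) (x : ℕ → ℝ)
    (ha : x 0 = a) (hb : x N = b)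
    (hx : ∀ j, 1 ≤ j → j ≤ N → x (j - 1) < x j)
    (hmax : ℝ)
    (hhmax : hmax = (Finset.Icc 1 N).sup'
      ⟨1, Finset.mem_Icc.mpr ⟨le_refl 1, hN⟩⟩ (fun j => x j - x (j - 1)))
    (v v' : ℕ → ℝ → ℝ)
    (hv : ∀ j, 1 ≤ j → j ≤ N → ∀ s ∈ Set.Icc (x (j - 1)) (x j),
      HasDerivWithinAt (v j) (v' j s) (Set.Icc (x (j - 1)) (x j)) s)
    (hv' : ∀ j, 1 ≤ j → j ≤ N → ContinuousOn (v' j) (Set.Icc (x (j - 1)) (x j))) :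
    (∑ j ∈ Finset.Icc 1 N, (x j - x (j - 1)) * (v j (x (j - 1))) ^ 2)
      ≤ 2 * (∑ j ∈ Finset.Icc 1 N, ∫ s in (x (j - 1))..(x j), (v j s) ^ 2)
        + hmax ^ 2 * (∑ j ∈ Finset.Icc 1 N, ∫ s in (x (j - 1))..(x j), (v' j s) ^ 2) := by
  simp only [← and_imp, ← Finset.mem_Icc] at hx hv hv'
  simpa only [Real.norm_eq_abs, sq_abs] using nodal_values_le_broken_H1_general
    (fun j hj => (hx j hj).le)
    (fun j hj => hhmax ▸ Finset.le_sup' (fun j => x j - x (j - 1)) hj)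
    (fun j hj => HasDerivWithinAt.continuousOn (hv j hj))
    (fun j hj t ht => (hv j hj t (Set.Ioo_subset_Icc_self ht)).mono_of_mem_nhdsWithin
      (Icc_mem_nhdsGT_of_mem (Set.Ioo_subset_Ico_self ht)))
    (fun j hj => ((hv' j hj).norm.pow 2).intervalIntegrable_of_Icc (hx j hj).le)
end
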